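/- Weakening holds for the real semantics: if Γ : e ⇓ᴿ_k Δ : v and b ∉ dom(Δ), then (Γ, b ↦ hv) : e ⇓ᴿ_k (Δ, b ↦ hv) : v. -/

import Mathlib

/-! ## Syntax of the fine-grain call-by-value lambda calculus with thunks -/

mutual
inductive Val : Type where
  | var : String → Val
  | ptr : Nat → Val
  | unit : Val
  | inl : Val → Val
  | inr : Val → Val
  | pair : Val → Val → Val
  | lam : String → Expr → Val

inductive HeapVal : Type where
  | fold : Val → HeapVal
  | memo : Val → HeapVal
  | lazy : String → Val → HeapVal

inductive Expr : Type where
  | ret : Val → Expr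
  | alloc : HeapVal → Expr
  | letE : String → Expr → Expr → Expr
  | caseE : Val → String → Expr → String → Expr → Expr
  | splitE : Val → String → String → Expr → Expr
  | app : Val → Val → Expr
  | unfoldE : Val → Expr
  | call : String → Val → Expr
  | force : Val → Expr
  | save : Nat → Val → Expr
  | spend : Nat → Val → Expr → Expr
  | pass : Val → Expr
end

/-! ## Capture-avoiding substitution (values substituted are closed) -/

mutual
def substV (v : Val) (x : String) : Val → Val
  | .var y => if y = x then v else .var y
  | .ptr a => .ptr a
  | .unit => .unit
  | .inl w => .inl (substV v x w)
  | .inr w => .inr (substV v x w)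
  | .pair w₁ w₂ => .pair (substV v x w₁) (substV v x w₂)
  | .lam y e => if y = x then .lam y e else .lam y (substE v x e)

def substH (v : Val) (x : String) : HeapVal → HeapVal
  | .fold w => .fold (substV v x w)
  | .memo w => .memo (substV v x w)
  | .lazy F w => .lazy F (substV v x w)

def substE (v : Val) (x : String) : Expr → Expr
  | .ret w => .ret (substV v x w)
  | .alloc hv => .alloc (substH v x hv)
  | .letE y e₁ e₂ => .letE y (substE v x e₁) (if y = x then e₂ else substE v x e₂)
  | .caseE w y₁ e₁ y₂ e₂ =>
      .caseE (substV v x w) y₁ (if y₁ = x then e₁ else substE v x e₁)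
        y₂ (if y₂ = x then e₂ else substE v x e₂)
  | .splitE w y₁ y₂ e =>
      .splitE (substV v x w) y₁ y₂ (if y₁ = x ∨ y₂ = x then e else substE v x e)
  | .app w₁ w₂ => .app (substV v x w₁) (substV v x w₂)
  | .unfoldE w => .unfoldE (substV v x w)
  | .call F w => .call F (substV v x w)
  | .force w => .force (substV v x w)
  | .save n w => .save n (substV v x w)
  | .spend n w e => .spend n (substV v x w) (substE v x e)
  | .pass w => .pass (substV v x w)
end

/-! ## Heaps: finite partial maps from pointers to (annotated) heap values -/

structure Heap (A : Type) : Type where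
  look : Nat → Option A
  fin : {a : Nat | look a ≠ none}.Finite

namespace Heap

def empty {A : Type} : Heap A := ⟨fun _ => none, by simp⟩

def upd {A : Type} (Γ : Heap A) (a : Nat) (v : A) : Heap A :=
  ⟨fun b => if b = a then some v else Γ.look b, by
    apply Set.Finite.subset (Γ.fin.insert a)
    intro b hb
    simp only [Set.mem_setOf_eq] at hb
    by_cases h : b = a
    · simp [h]
    · simp only [h, if_false] at hb
      exact Set.mem_insert_iff.mpr (Or.inr hb)⟩

def erase {A : Type} (Γ : Heap A) (a : Nat) : Heap A :=
  ⟨fun b => if b = a then none else Γ.look b, by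
    apply Set.Finite.subset Γ.fin
    intro b hb
    simp only [Set.mem_setOf_eq] at hb ⊢
    by_cases h : b = a
    · simp [h] at hb
    · simpa [h] using hb⟩

def eraseSet {A : Type} (Γ : Heap A) (D : Finset Nat) : Heap A :=
  ⟨fun b => if b ∈ D then none else Γ.look b, by
    apply Set.Finite.subset Γ.fin
    intro b hb
    simp only [Set.mem_setOf_eq] at hb ⊢
    by_cases h : b ∈ D
    · simp [h] at hb
    · simpa [h] using hb⟩

def map {A B : Type} (Γ : Heap A) (f : A → B) : Heap B :=
  ⟨fun b => (Γ.look b).map f, by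
    apply Set.Finite.subset Γ.fin
    intro b hb
    simp only [Set.mem_setOf_eq] at hb ⊢
    intro h
    rw [h] at hb
    simp at hb⟩

noncomputable def dom {A : Type} (Γ : Heap A) : Finset Nat := Γ.fin.toFinset

/-- Sum a numeric annotation over all cells of the heap. -/
noncomputable def total {A : Type} (Γ : Heap A) (f : A → ℕ) : ℕ :=
  ∑ a ∈ Γ.dom, (Γ.look a).elim 0 f

end Heap

/-! ## The real cost semantics ⇓ᴿ -/

/-- Environment of top-level (possibly recursive) function definitions. -/
abbrev FEnv := String → Option (String × Expr)

abbrev RHeap := Heap HeapVal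

/-- Big-step real semantics `Γ : e ⇓ᴿ_k Δ : v`.  Lambda applications and
function calls cost one step; `save`, `spend` and `pass` are no-ops. -/
inductive RBig (𝓕 : FEnv) : RHeap → Expr → Nat → RHeap → Val → Prop where
  | ret : ∀ Γ v, RBig 𝓕 Γ (.ret v) 0 Γ v
  | alloc : ∀ Γ a hv, Γ.look a = none →
      RBig 𝓕 Γ (.alloc hv) 0 (Γ.upd a hv) (.ptr a)
  | letE : ∀ Γ Δ Θ x e₁ e₂ k l v w,
      RBig 𝓕 Γ e₁ k Δ v → RBig 𝓕 Δ (substE v x e₂) l Θ w →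
      RBig 𝓕 Γ (.letE x e₁ e₂) (k + l) Θ w
  | caseL : ∀ Γ Δ v x₁ e₁ x₂ e₂ k w,
      RBig 𝓕 Γ (substE v x₁ e₁) k Δ w →
      RBig 𝓕 Γ (.caseE (.inl v) x₁ e₁ x₂ e₂) k Δ w
  | caseR : ∀ Γ Δ v x₁ e₁ x₂ e₂ k w,
      RBig 𝓕 Γ (substE v x₂ e₂) k Δ w →
      RBig 𝓕 Γ (.caseE (.inr v) x₁ e₁ x₂ e₂) k Δ w
  | splitE : ∀ Γ Δ v₁ v₂ x y e k w,
      RBig 𝓕 Γ (substE v₂ y (substE v₁ x e)) k Δ w →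
      RBig 𝓕 Γ (.splitE (.pair v₁ v₂) x y e) k Δ w
  | app : ∀ Γ Δ x e v k w,
      RBig 𝓕 Γ (substE v x e) k Δ w →
      RBig 𝓕 Γ (.app (.lam x e) v) (k + 1) Δ w
  | unfoldE : ∀ Γ a v, Γ.look a = some (.fold v) →
      RBig 𝓕 Γ (.unfoldE (.ptr a)) 0 Γ v
  | call : ∀ Γ Δ F x e v k w, 𝓕 F = some (x, e) →
      RBig 𝓕 Γ (substE v x e) k Δ w →
      RBig 𝓕 Γ (.call F v) (k + 1) Δ w
  | force : ∀ Γ Δ a F v k w, Γ.look a = some (.lazy F v) →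
      RBig 𝓕 (Γ.erase a) (.call F v) k Δ w →
      RBig 𝓕 Γ (.force (.ptr a)) k (Δ.upd a (.memo w)) w
  | recall : ∀ Γ a v, Γ.look a = some (.memo v) →
      RBig 𝓕 Γ (.force (.ptr a)) 0 Γ v
  | save : ∀ Γ m v, RBig 𝓕 Γ (.save m v) 0 Γ v
  | spend : ∀ Γ Δ m v e k w, RBig 𝓕 Γ e k Δ w →
      RBig 𝓕 Γ (.spend m v e) k Δ w
  | pass : ∀ Γ v, RBig 𝓕 Γ (.pass v) 0 Γ v

theorem Heap.ext_look {A : Type} {Γ Δ : Heap A} (h : ∀ a, Γ.look a = Δ.look a) : Γ = Δ := by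
  cases Γ
  cases Δ
  have := funext h
  simp only at this
  subst this
  rfl

theorem Heap.upd_look {A : Type} (Γ : Heap A) (a c : Nat) (v : A) :
    (Γ.upd a v).look c = if c = a then some v else Γ.look c := rfl

theorem Heap.erase_look {A : Type} (Γ : Heap A) (a c : Nat) :
    (Γ.erase a).look c = if c = a then none else Γ.look c := rfl

theorem Heap.upd_comm {A : Type} (Γ : Heap A) {a b : Nat} (hab : b ≠ a) (v w : A) :
    (Γ.upd a v).upd b w = (Γ.upd b w).upd a v := by
  apply Heap.ext_look
  intro c
  simp only [Heap.upd_look]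
  grind

theorem Heap.erase_upd_comm {A : Type} (Γ : Heap A) {a b : Nat} (hab : b ≠ a) (w : A) :
    (Γ.erase a).upd b w = (Γ.upd b w).erase a := by
  apply Heap.ext_look
  intro c
  simp only [Heap.upd_look, Heap.erase_look]
  grind

/-- Evaluation never removes a cell from the domain of the heap. -/
theorem RBig.look_none {𝓕 : FEnv} {Γ Δ : RHeap} {e : Expr} {k : ℕ} {v : Val} {b : ℕ}
    (h : RBig 𝓕 Γ e k Δ v) : Δ.look b = none → Γ.look b = none := by
  induction h <;> (try simp only [Heap.upd_look, Heap.erase_look] at *) <;> grind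

theorem RBig.look_upd {Γ : RHeap} {a b : ℕ} {hv w : HeapVal} (hb : Γ.look b = none)
    (h : Γ.look a = some w) : (Γ.upd b hv).look a = some w := by
  simp only [Heap.upd_look]
  grind

/-- **Weakening for the real semantics** (Lemma `real-weakening`):
if `Γ : e ⇓ᴿ_k Δ : v` and `b ∉ dom(Δ)`, then
`(Γ, b ↦ hv) : e ⇓ᴿ_k (Δ, b ↦ hv) : v`. -/
theorem real_weakening (𝓕 : FEnv) (Γ Δ : RHeap) (e : Expr) (k : ℕ) (v : Val)
    (b : ℕ) (hv : HeapVal)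
    (h : RBig 𝓕 Γ e k Δ v) (hb : Δ.look b = none) :
    RBig 𝓕 (Γ.upd b hv) e k (Δ.upd b hv) v := by
  induction h with
  | ret => exact .ret _ _
  | alloc Γ a hv' h =>
    have hab : b ≠ a := by
      rintro rfl
      simp [Heap.upd_look] at hb
    rw [Heap.upd_comm _ hab]
    refine .alloc _ _ _ ?_
    simp [Heap.upd_look, h, hab.symm]
  | letE Γ Δ Θ x e₁ e₂ k l v w h₁ h₂ ih₁ ih₂ =>
    exact .letE _ _ _ _ _ _ _ _ _ _ (ih₁ (h₂.look_none hb)) (ih₂ hb)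
  | caseL _ _ _ _ _ _ _ _ _ _ ih => exact .caseL _ _ _ _ _ _ _ _ _ (ih hb)
  | caseR _ _ _ _ _ _ _ _ _ _ ih => exact .caseR _ _ _ _ _ _ _ _ _ (ih hb)
  | splitE _ _ _ _ _ _ _ _ _ _ ih => exact .splitE _ _ _ _ _ _ _ _ _ (ih hb)
  | app _ _ _ _ _ _ _ _ ih => exact .app _ _ _ _ _ _ _ (ih hb)
  | unfoldE _ _ _ h => exact .unfoldE _ _ _ (RBig.look_upd hb h)
  | call _ _ _ _ _ _ _ _ h _ ih => exact .call _ _ _ _ _ _ _ _ h (ih hb)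
  | force Γ Δ a F v k w h _ ih =>
    have hab : b ≠ a := by
      rintro rfl
      simp [Heap.upd_look] at hb
    rw [Heap.upd_comm _ hab]
    have hb' : Δ.look b = none := by simpa [Heap.upd_look, hab] using hb
    have := ih hb'
    rw [Heap.erase_upd_comm _ hab] at this
    refine .force _ _ _ _ _ _ _ ?_ this
    simp [Heap.upd_look, h, hab.symm]
  | save => exact .save _ _ _
  | spend _ _ _ _ _ _ _ _ ih => exact .spend _ _ _ _ _ _ _ (ih hb)
  | pass => exact .pass _ _
  | _ =>
    rename_i h
    exact RBig.recall _ _ _ (RBig.look_upd hb h)
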